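/- Let u₀, u₁ : ℝⁿ → ℝ be convex functions, with Legendre transforms u_j*(x) = sup_{p ∈ ℝⁿ} (⟨x, p⟩ − u_j(p)) ∈ ℝ ∪ {+∞}. For t ∈ [0,1] define u_t(p) = sup { ⟨p, x⟩ − (1−t) u₀*(x) − t u₁*(x) : x ∈ ℝⁿ, u₀*(x) < ∞ and u₁*(x) < ∞ }. Then for every t ∈ [0,1], ∫_{ℝⁿ} e^{−u_t(p)} dp ≥ (∫_{ℝⁿ} e^{−u₀(p)} dp)^{1−t} · (∫_{ℝⁿ} e^{−u₁(p)} dp)^{t}; that is, t ↦ log ∫_{ℝⁿ} e^{−u_t} dp is concave on [0,1] with endpoint values log ∫ e^{−u₀} and log ∫ e^{−u₁}. -/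

import Mathlib

/-!
By the Fenchel–Young inequality, every `x` in the common domain of `u₀*` and `u₁*` satisfies
`⟨(1-t)p + tq, x⟩ - (1-t) u₀*(x) - t u₁*(x) ≤ (1-t) u₀(p) + t u₁(q)`, so that
`u_t((1-t)p + tq) ≤ (1-t) u₀(p) + t u₁(q)` for all `p, q` (`legendreGeodesic_le`). Hence
`f = e^{-u₀}`, `g = e^{-u₁}`, `h = e^{-u_t}` satisfy `f(p)^{1-t} g(q)^t ≤ h((1-t)p + tq)`, and the
Prékopa–Leindler inequality (`prekopa_leindler`) is exactly the claim for `0 < t < 1`. At the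
endpoints the pointwise bound with `p = q` suffices.

The Prékopa–Leindler inequality is proved by induction on the dimension. The one-dimensional case
(`pl_real`) follows from the Brunn–Minkowski inequality on the line (`measurable_add_le`) applied to
superlevel sets, the layer-cake formula and the arithmetic–geometric mean inequality.
-/

open MeasureTheory

/-- The set of points where the Legendre transform
`u*(x) = sup_p (⟨x,p⟩ - u(p))` of `u : ℝⁿ → ℝ` is finite (`< +∞`). -/
def legendreDom {n : ℕ} (u : (Fin n → ℝ) → ℝ) : Set (Fin n → ℝ) :=
  {x | BddAbove (Set.range fun p => (∑ i, x i * p i) - u p)}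

/-- The Legendre transform `u*(x) = sup_p (⟨x,p⟩ - u(p))` of `u : ℝⁿ → ℝ`
(a real number for `x ∈ legendreDom u`; junk otherwise). -/
noncomputable def legendre {n : ℕ} (u : (Fin n → ℝ) → ℝ) (x : Fin n → ℝ) : ℝ :=
  sSup (Set.range fun p => (∑ i, x i * p i) - u p)

/-- The geodesic `u_t` between `u₀` and `u₁`, obtained by connecting the Legendre
transforms by an affine path and transforming back:
`u_t(p) = sup { ⟨p,x⟩ - (1-t) u₀*(x) - t u₁*(x) : u₀*(x) < ∞ and u₁*(x) < ∞ }`. -/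
noncomputable def legendreGeodesic {n : ℕ} (u₀ u₁ : (Fin n → ℝ) → ℝ)
    (t : ℝ) (p : Fin n → ℝ) : ℝ :=
  sSup {r | ∃ x ∈ legendreDom u₀ ∩ legendreDom u₁,
    r = (∑ i, p i * x i) - (1 - t) * legendre u₀ x - t * legendre u₁ x}

open scoped ENNReal Pointwise

/-! ### The Brunn–Minkowski inequality on the line -/

/-- The one-dimensional Brunn–Minkowski inequality for compact sets. With `k = max K` and `l = min L`,
the sets `a • K + b l` and `a k + b • L` both lie in `a • K + b • L` and meet only at `a k + b l`. -/
theorem compact_add_le {a b : ℝ} (ha : 0 < a) (hb : 0 < b) {K L C : Set ℝ}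
    (hK : IsCompact K) (hL : IsCompact L) (hK' : K.Nonempty) (hL' : L.Nonempty)
    (h : ∀ x ∈ K, ∀ y ∈ L, a * x + b * y ∈ C) :
    ENNReal.ofReal a * volume K + ENNReal.ofReal b * volume L ≤ volume C := by
  obtain ⟨k, hkK, hk⟩ := hK.exists_isGreatest hK'
  obtain ⟨l, hlL, hl⟩ := hL.exists_isLeast hL'
  have hmeas : ∀ (c d : ℝ) (S : Set ℝ), 0 < c →
      volume (d +ᵥ (c • S)) = ENNReal.ofReal c * volume S := by
    intro c d S hc
    rw [measure_vadd, Measure.addHaar_smul]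
    simp [abs_of_pos hc]
  have hsub : ((b * l) +ᵥ (a • K)) ∪ ((a * k) +ᵥ (b • L)) ⊆ C := by
    rintro z (hz | hz)
    · obtain ⟨_, ⟨x, hx, rfl⟩, rfl⟩ := hz
      have := h x hx l hlL
      simpa [add_comm] using this
    · obtain ⟨_, ⟨y, hy, rfl⟩, rfl⟩ := hz
      simpa using h k hkK y hy
  have hinter : ((b * l) +ᵥ (a • K)) ∩ ((a * k) +ᵥ (b • L)) ⊆ {a * k + b * l} := by
    rintro z ⟨hz, hz'⟩
    obtain ⟨_, ⟨x, hx, rfl⟩, rfl⟩ := hz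
    obtain ⟨_, ⟨y, hy, rfl⟩, hxy⟩ := hz'
    have h1 := mul_le_mul_of_nonneg_left (hk hx) ha.le
    have h2 := mul_le_mul_of_nonneg_left (hl hy) hb.le
    simp only [vadd_eq_add, smul_eq_mul, Set.mem_singleton_iff] at hxy ⊢
    linarith
  rw [← hmeas a (b * l) K ha, ← hmeas b (a * k) L hb, ← measure_union₀ _ _]
  · exact measure_mono hsub
  · exact ((hL.smul b).vadd (a * k)).measurableSet.nullMeasurableSet
  · exact measure_mono_null hinter (by simp)

/-- The one-dimensional Brunn–Minkowski inequality for measurable sets, by inner regularity. -/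
theorem measurable_add_le {a b : ℝ} (ha : 0 < a) (hb : 0 < b) {A B C : Set ℝ}
    (hA : MeasurableSet A) (hB : MeasurableSet B) (hA' : A.Nonempty) (hB' : B.Nonempty)
    (h : ∀ x ∈ A, ∀ y ∈ B, a * x + b * y ∈ C) :
    ENNReal.ofReal a * volume A + ENNReal.ofReal b * volume B ≤ volume C := by
  obtain ⟨x₀, hx₀⟩ := hA'
  obtain ⟨y₀, hy₀⟩ := hB'
  rw [hA.measure_eq_iSup_isCompact, hB.measure_eq_iSup_isCompact]
  simp only [iSup_and', ENNReal.mul_iSup]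
  refine ENNReal.biSup_add_biSup_le' ⟨∅, by simp⟩ ⟨∅, by simp⟩ ?_
  rintro K ⟨hKA, hK⟩ L ⟨hLB, hL⟩
  refine le_trans ?_ (compact_add_le ha hb (hK.insert x₀) (hL.insert y₀)
    (Set.insert_nonempty _ _) (Set.insert_nonempty _ _)
    fun x hx y hy => h x (Set.insert_subset hx₀ hKA hx) y (Set.insert_subset hy₀ hLB hy))
  gcongr <;> exact Set.subset_insert _ _

/-! ### The Prékopa–Leindler inequality -/

theorem ennreal_geom_mean_le {t : ℝ} (h0 : 0 < t) (h1 : t < 1) (x y : ℝ≥0∞) :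
    x ^ (1 - t) * y ^ t ≤ ENNReal.ofReal (1 - t) * x + ENNReal.ofReal t * y := by
  have ht' : 0 < 1 - t := sub_pos.2 h1
  rcases eq_or_ne x ⊤ with rfl | hx
  · rw [ENNReal.mul_top (by simpa using h1), top_add]
    exact le_top
  rcases eq_or_ne y ⊤ with rfl | hy
  · rw [ENNReal.mul_top (by simpa using h0), add_top]
    exact le_top
  lift x to NNReal using hx
  lift y to NNReal using hy
  have := NNReal.geom_mean_le_arith_mean2_weighted (1 - t).toNNReal t.toNNReal x y (by
    rw [← Real.toNNReal_add ht'.le h0.le]; simp)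
  rw [Real.coe_toNNReal _ ht'.le, Real.coe_toNNReal _ h0.le] at this
  rw [← ENNReal.coe_rpow_of_nonneg _ ht'.le, ← ENNReal.coe_rpow_of_nonneg _ h0.le]
  rw [← ENNReal.coe_mul]
  exact (ENNReal.coe_le_coe.2 this).trans_eq (by push_cast; rfl)

/-- The one-dimensional Prékopa–Leindler inequality, with the arithmetic mean on the left, for
functions of supremum `1`. For `s < 1` the superlevel sets `{f > s}` and `{g > s}` are nonempty and
their combination lies in `{h > s}`, so Brunn–Minkowski can be integrated over `s`. -/
theorem pl_normalized {t : ℝ} (h0 : 0 < t) (h1 : t < 1) {f g h : ℝ → ℝ≥0∞}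
    (hf : Measurable f) (hg : Measurable g) (hh : Measurable h)
    (hf1 : ⨆ x, f x = 1) (hg1 : ⨆ x, g x = 1)
    (hfgh : ∀ x y, f x ^ (1 - t) * g y ^ t ≤ h ((1 - t) * x + t * y)) :
    ENNReal.ofReal (1 - t) * (∫⁻ x, f x) + ENNReal.ofReal t * (∫⁻ x, g x) ≤ ∫⁻ x, h x := by
  have ht' : 0 < 1 - t := sub_pos.2 h1
  have layer : ∀ F : ℝ → ℝ≥0∞, Measurable F → (∀ x, F x ≤ 1) →
      ∫⁻ x, F x = ∫⁻ s in Set.Ioi (0 : ℝ), volume {x | ENNReal.ofReal s < F x} := by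
    intro F hF hF1
    have hfin : ∀ x, F x ≠ ⊤ := fun x => ((hF1 x).trans_lt ENNReal.one_lt_top).ne
    have := lintegral_eq_lintegral_meas_lt (f := fun x => (F x).toReal) volume
      (Filter.Eventually.of_forall fun x => ENNReal.toReal_nonneg) hF.ennreal_toReal.aemeasurable
    simp only [ENNReal.ofReal_toReal (hfin _)] at this
    rw [this]
    refine setLIntegral_congr_fun measurableSet_Ioi fun s hs => ?_
    simp only [ENNReal.ofReal_lt_iff_lt_toReal (le_of_lt hs) (hfin _)]
  have meas : ∀ F : ℝ → ℝ≥0∞, Measurable fun s : ℝ => volume {x | ENNReal.ofReal s < F x} := by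
    intro F
    refine Antitone.measurable fun s s' hs => measure_mono fun x hx => ?_
    exact (ENNReal.ofReal_le_ofReal hs).trans_lt hx
  have hf1' : ∀ x, f x ≤ 1 := fun x => hf1 ▸ le_iSup f x
  have hg1' : ∀ x, g x ≤ 1 := fun x => hg1 ▸ le_iSup g x
  -- Since `f, g ≤ 1`, truncating `h` at `1` preserves the hypothesis and makes `h` finite.
  calc _ ≤ ∫⁻ x, min (h x) 1 := ?_
    _ ≤ _ := lintegral_mono fun x => min_le_left _ _
  rw [layer f hf hf1', layer g hg hg1', layer _ (hh.min measurable_const) fun x => min_le_right _ _,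
    ← lintegral_const_mul _ (meas f), ← lintegral_const_mul _ (meas g),
    ← lintegral_add_left ((meas f).const_mul _)]
  refine lintegral_mono fun s => ?_
  rcases le_or_gt 1 (ENNReal.ofReal s) with hs | hs
  · have e : ∀ F : ℝ → ℝ≥0∞, (∀ x, F x ≤ 1) → {x | ENNReal.ofReal s < F x} = ∅ := fun F hF =>
      Set.eq_empty_of_forall_notMem fun x hx => absurd (hx.trans_le ((hF x).trans hs)) (lt_irrefl _)
    simp [e f hf1', e g hg1']
  · refine measurable_add_le ht' h0 (measurableSet_lt measurable_const hf)
      (measurableSet_lt measurable_const hg) (lt_iSup_iff.1 (hs.trans_eq hf1.symm))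
      (lt_iSup_iff.1 (hs.trans_eq hg1.symm)) ?_
    intro x hx y hy
    refine lt_min (lt_of_lt_of_le ?_ (hfgh x y)) hs
    calc ENNReal.ofReal s = ENNReal.ofReal s ^ (1 - t) * ENNReal.ofReal s ^ t := by
          rw [← ENNReal.rpow_add_of_nonneg _ _ ht'.le h0.le]; simp
      _ < _ := ENNReal.mul_lt_mul (ENNReal.rpow_lt_rpow hx ht') (ENNReal.rpow_lt_rpow hy h0)

/-- The one-dimensional Prékopa–Leindler inequality for bounded functions, by rescaling `f` and `g`
to have supremum `1` and applying the weighted arithmetic–geometric mean inequality. -/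
theorem pl_bounded {t : ℝ} (h0 : 0 < t) (h1 : t < 1) {f g h : ℝ → ℝ≥0∞}
    (hf : Measurable f) (hg : Measurable g) (hh : Measurable h)
    (hf1 : ⨆ x, f x ≠ ⊤) (hg1 : ⨆ x, g x ≠ ⊤)
    (hfgh : ∀ x y, f x ^ (1 - t) * g y ^ t ≤ h ((1 - t) * x + t * y)) :
    (∫⁻ x, f x) ^ (1 - t) * (∫⁻ x, g x) ^ t ≤ ∫⁻ x, h x := by
  have ht' : 0 < 1 - t := sub_pos.2 h1
  set M := ⨆ x, f x with hM
  set N := ⨆ x, g x with hN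
  rcases eq_or_ne M 0 with hM0 | hM0
  · have : ∀ x, f x = 0 := fun x => le_antisymm (hM0 ▸ le_iSup f x) zero_le
    simp [this, ht']
  rcases eq_or_ne N 0 with hN0 | hN0
  · have : ∀ x, g x = 0 := fun x => le_antisymm (hN0 ▸ le_iSup g x) zero_le
    simp [this, h0]
  set c := M ^ (1 - t) * N ^ t with hc
  have hc0 : c ≠ 0 := mul_ne_zero (by simp [hM0, hf1]) (by simp [hN0, hg1])
  have hct : c ≠ ⊤ := ENNReal.mul_ne_top (by simp [hM0, hf1]) (by simp [hN0, hg1])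
  have hcinv : c⁻¹ = (M⁻¹) ^ (1 - t) * (N⁻¹) ^ t := by
    rw [hc, ENNReal.mul_inv, ENNReal.inv_rpow, ENNReal.inv_rpow] <;>
    simp [hM0, hN0, hf1, hg1]
  have key := pl_normalized h0 h1 (hf.const_mul M⁻¹) (hg.const_mul N⁻¹) (hh.const_mul c⁻¹)
    (by rw [← ENNReal.mul_iSup, ← hM, ENNReal.inv_mul_cancel hM0 hf1])
    (by rw [← ENNReal.mul_iSup, ← hN, ENNReal.inv_mul_cancel hN0 hg1])
    (fun x y => by
      rw [ENNReal.mul_rpow_of_nonneg _ _ ht'.le, ENNReal.mul_rpow_of_nonneg _ _ h0.le,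
        mul_mul_mul_comm, ← hcinv]
      gcongr
      exact hfgh x y)
  have key := (ennreal_geom_mean_le h0 h1 _ _).trans key
  rw [lintegral_const_mul _ hf, lintegral_const_mul _ hg, lintegral_const_mul _ hh,
    ENNReal.mul_rpow_of_nonneg _ _ ht'.le, ENNReal.mul_rpow_of_nonneg _ _ h0.le,
    mul_mul_mul_comm, ← hcinv] at key
  exact (ENNReal.mul_le_mul_iff_right (ENNReal.inv_ne_zero.2 hct) (ENNReal.inv_ne_top.2 hc0)).1 key

/-- The one-dimensional Prékopa–Leindler inequality, by truncating `f` and `g` and passing to the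
limit. -/
theorem pl_real {t : ℝ} (h0 : 0 < t) (h1 : t < 1) {f g h : ℝ → ℝ≥0∞}
    (hf : Measurable f) (hg : Measurable g) (hh : Measurable h)
    (hfgh : ∀ x y, f x ^ (1 - t) * g y ^ t ≤ h ((1 - t) * x + t * y)) :
    (∫⁻ x, f x) ^ (1 - t) * (∫⁻ x, g x) ^ t ≤ ∫⁻ x, h x := by
  have ht' : 0 < 1 - t := sub_pos.2 h1
  have lim : ∀ F : ℝ → ℝ≥0∞, Measurable F →
      Filter.Tendsto (fun k : ℕ => ∫⁻ x, min (F x) k) Filter.atTop (nhds (∫⁻ x, F x)) := by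
    intro F hF
    refine lintegral_tendsto_of_tendsto_of_monotone (fun k => (hF.min measurable_const).aemeasurable)
      (Filter.Eventually.of_forall fun x k k' hk => ?_) (Filter.Eventually.of_forall fun x => ?_)
    · exact min_le_min_left _ (by exact_mod_cast hk)
    · have := (tendsto_const_nhds (x := F x)).min ENNReal.tendsto_nat_nhds_top
      simpa using this
  have bd : ∀ (F : ℝ → ℝ≥0∞) (k : ℕ), ⨆ x, min (F x) k ≠ ⊤ := fun F k =>
    ((iSup_le fun x => min_le_right _ _).trans_lt (ENNReal.natCast_lt_top k)).ne
  have key : ∀ k : ℕ, (∫⁻ x, min (f x) k) ^ (1 - t) * (∫⁻ x, min (g x) k) ^ t ≤ ∫⁻ x, h x :=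
    fun k => pl_bounded h0 h1 (hf.min measurable_const) (hg.min measurable_const) hh (bd f k)
      (bd g k) fun x y => le_trans (by gcongr <;> exact min_le_left _ _) (hfgh x y)
  -- Multiplication on `[0, ∞]` is discontinuous at `0 * ∞`, so zero integrals are treated apart.
  rcases eq_or_ne (∫⁻ x, f x) 0 with hf0 | hf0
  · simp [hf0, ht']
  rcases eq_or_ne (∫⁻ x, g x) 0 with hg0 | hg0
  · simp [hg0, h0]
  refine le_of_tendsto' (ENNReal.Tendsto.mul
    ((ENNReal.continuous_rpow_const.tendsto _).comp (lim f hf)) (Or.inl ?_)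
    ((ENNReal.continuous_rpow_const.tendsto _).comp (lim g hg)) (Or.inl ?_)) key
  · simp [hf0, ht'.not_gt]
  · simp [hg0, h0.not_gt]

theorem lintegral_fin_succ {n : ℕ} {f : (Fin (n + 1) → ℝ) → ℝ≥0∞} (hf : Measurable f) :
    ∫⁻ p, f p = ∫⁻ x : ℝ, ∫⁻ y : Fin n → ℝ, f (Fin.cons x y) := by
  have e := (volume_preserving_piFinSuccAbove (fun _ : Fin (n + 1) => ℝ) 0).symm
  rw [← e.lintegral_comp hf, Measure.volume_eq_prod, lintegral_prod]
  · simp [MeasurableEquiv.piFinSuccAbove, Fin.consEquiv]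
  · exact (hf.comp (MeasurableEquiv.measurable _)).aemeasurable

theorem measurable_fin_cons {n : ℕ} :
    Measurable fun z : ℝ × (Fin n → ℝ) => (Fin.cons z.1 z.2 : Fin (n + 1) → ℝ) := by
  refine measurable_pi_lambda _ fun i => ?_
  refine Fin.cases ?_ (fun j => ?_) i
  · simpa using measurable_fst
  · simp only [Fin.cons_succ]; fun_prop

/-- The Prékopa–Leindler inequality on `ℝⁿ`. In the inductive step, the induction hypothesis shows
that the integrals over the slices of fixed first coordinate satisfy the hypothesis of the
one-dimensional inequality. -/
theorem prekopa_leindler {t : ℝ} (h0 : 0 < t) (h1 : t < 1) (n : ℕ) :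
    ∀ {f g h : (Fin n → ℝ) → ℝ≥0∞}, Measurable f → Measurable g → Measurable h →
    (∀ x y, f x ^ (1 - t) * g y ^ t ≤ h ((1 - t) • x + t • y)) →
    (∫⁻ x, f x) ^ (1 - t) * (∫⁻ x, g x) ^ t ≤ ∫⁻ x, h x := by
  induction n with
  | zero =>
    intro f g h hf hg hh hfgh
    have e : ∀ F : (Fin 0 → ℝ) → ℝ≥0∞, ∫⁻ x, F x = F 0 := by
      intro F
      rw [volume_pi, Measure.pi_of_empty _ 0, lintegral_dirac]
    simpa [e] using hfgh 0 0
  | succ n ih =>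
    intro f g h hf hg hh hfgh
    rw [lintegral_fin_succ hf, lintegral_fin_succ hg, lintegral_fin_succ hh]
    have m1 : ∀ {F : (Fin (n + 1) → ℝ) → ℝ≥0∞}, Measurable F →
        Measurable fun x : ℝ => ∫⁻ y : Fin n → ℝ, F (Fin.cons x y) := fun hF =>
      (hF.comp measurable_fin_cons).lintegral_prod_right'
    have m2 : ∀ {F : (Fin (n + 1) → ℝ) → ℝ≥0∞}, Measurable F → ∀ x : ℝ,
        Measurable fun y : Fin n → ℝ => F (Fin.cons x y) := fun hF x =>
      hF.comp (measurable_fin_cons.comp measurable_prodMk_left)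
    refine pl_real h0 h1 (m1 hf) (m1 hg) (m1 hh) fun x x' => ?_
    refine ih (m2 hf x) (m2 hg x') (m2 hh _) fun y y' => ?_
    convert! hfgh (Fin.cons x y) (Fin.cons x' y') using 2
    ext i
    refine Fin.cases ?_ (fun j => ?_) i <;> simp

/-! ### The Legendre geodesic -/

theorem inner_sub_le_legendre {n : ℕ} {u : (Fin n → ℝ) → ℝ} {x : Fin n → ℝ}
    (hx : x ∈ legendreDom u) (p : Fin n → ℝ) : (∑ i, p i * x i) - u p ≤ legendre u x := by
  simp_rw [mul_comm (p _)]
  exact le_csSup hx (Set.mem_range_self p)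

/-- Every competitor in the supremum defining `u_t((1-t)p + tq)` is at most `(1-t) u₀(p) + t u₁(q)`,
by the Fenchel–Young inequality for `u₀` at `p` and for `u₁` at `q`. -/
theorem geodesic_term_le {n : ℕ} {u₀ u₁ : (Fin n → ℝ) → ℝ} {t : ℝ} (ht : t ∈ Set.Icc (0 : ℝ) 1)
    (p q : Fin n → ℝ) {x : Fin n → ℝ} (hx : x ∈ legendreDom u₀ ∩ legendreDom u₁) :
    (∑ i, ((1 - t) • p + t • q) i * x i) - (1 - t) * legendre u₀ x - t * legendre u₁ x ≤
      (1 - t) * u₀ p + t * u₁ q := by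
  have h₀ := mul_le_mul_of_nonneg_left (inner_sub_le_legendre hx.1 p) (sub_nonneg.2 ht.2)
  have h₁ := mul_le_mul_of_nonneg_left (inner_sub_le_legendre hx.2 q) ht.1
  have e : ∑ i, ((1 - t) • p + t • q) i * x i =
      (1 - t) * (∑ i, p i * x i) + t * ∑ i, q i * x i := by
    simp only [Finset.mul_sum, ← Finset.sum_add_distrib, Pi.add_apply, Pi.smul_apply, smul_eq_mul]
    exact Finset.sum_congr rfl fun i _ => by ring
  rw [e]
  linarith

/-- Nonemptiness of the common domain is needed because otherwise `legendreGeodesic` takes the junk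
value `sSup ∅ = 0`. -/
theorem legendreGeodesic_le {n : ℕ} {u₀ u₁ : (Fin n → ℝ) → ℝ} {t : ℝ}
    (ht : t ∈ Set.Icc (0 : ℝ) 1) (hne : (legendreDom u₀ ∩ legendreDom u₁).Nonempty)
    (p q : Fin n → ℝ) :
    legendreGeodesic u₀ u₁ t ((1 - t) • p + t • q) ≤ (1 - t) * u₀ p + t * u₁ q := by
  obtain ⟨x₀, hx₀⟩ := hne
  refine csSup_le ⟨_, x₀, hx₀, rfl⟩ ?_
  rintro _ ⟨x, hx, rfl⟩
  exact geodesic_term_le ht p q hx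

/-- The geodesic `u_t` is a supremum of affine functions, hence lower semicontinuous. -/
theorem measurable_legendreGeodesic {n : ℕ} {u₀ u₁ : (Fin n → ℝ) → ℝ} {t : ℝ}
    (ht : t ∈ Set.Icc (0 : ℝ) 1) : Measurable (legendreGeodesic u₀ u₁ t) := by
  have e : legendreGeodesic u₀ u₁ t = fun p => ⨆ x : ↥(legendreDom u₀ ∩ legendreDom u₁),
      (∑ i, p i * x.1 i) - (1 - t) * legendre u₀ x.1 - t * legendre u₁ x.1 := by
    ext p
    rw [legendreGeodesic, iSup]
    congr 1
    ext r
    constructor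
    · rintro ⟨x, hx, rfl⟩
      exact ⟨⟨x, hx⟩, rfl⟩
    · rintro ⟨x, rfl⟩
      exact ⟨x.1, x.2, rfl⟩
  rw [e]
  refine (lowerSemicontinuous_ciSup (fun p => ?_) fun x => ?_).measurable
  · refine ⟨(1 - t) * u₀ p + t * u₁ p, ?_⟩
    rintro _ ⟨x, rfl⟩
    have := geodesic_term_le ht p p x.2
    rwa [← add_smul, sub_add_cancel, one_smul] at this
  · exact Continuous.lowerSemicontinuous (by fun_prop)

/-- Concavity of `t ↦ log ∫ e^{-u_t}` along the Legendre-transform geodesic `u_t`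
connecting two convex functions `u₀, u₁ : ℝⁿ → ℝ`:
`∫ e^{-u_t} ≥ (∫ e^{-u₀})^{1-t} (∫ e^{-u₁})^t` for `t ∈ [0,1]`. -/
theorem legendreGeodesic_exp_integral_concave
    (n : ℕ) (u₀ u₁ : (Fin n → ℝ) → ℝ)
    (hu₀ : ConvexOn ℝ Set.univ u₀) (hu₁ : ConvexOn ℝ Set.univ u₁) :
    ∀ t ∈ Set.Icc (0 : ℝ) 1,
      (∫⁻ p, ENNReal.ofReal (Real.exp (-(u₀ p)))) ^ (1 - t) *
        (∫⁻ p, ENNReal.ofReal (Real.exp (-(u₁ p)))) ^ t ≤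
      ∫⁻ p, ENNReal.ofReal (Real.exp (-(legendreGeodesic u₀ u₁ t p))) := by
  intro t ht
  rcases (legendreDom u₀ ∩ legendreDom u₁).eq_empty_or_nonempty with hE | hne
  · -- Here `u_t = sSup ∅ = 0`, so the right-hand side is the volume of `ℝⁿ`, which is infinite
    -- for `n > 0`; for `n = 0` the domains cannot be empty.
    rcases Nat.eq_zero_or_pos n with rfl | hn
    · exfalso
      have hmem : ∀ u : (Fin 0 → ℝ) → ℝ, (0 : Fin 0 → ℝ) ∈ legendreDom u := fun u =>
        (Set.finite_range _).bddAbove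
      exact (Set.mem_empty_iff_false (0 : Fin 0 → ℝ)).1 (hE ▸ ⟨hmem u₀, hmem u₁⟩)
    · have : Nonempty (Fin n) := ⟨⟨0, hn⟩⟩
      have hz : ∀ p, legendreGeodesic u₀ u₁ t p = 0 := fun p => by
        simp [legendreGeodesic, hE]
      have htop : volume (Set.univ : Set (Fin n → ℝ)) = ⊤ :=
        measure_univ_of_isAddLeftInvariant volume
      simp [hz, htop]
  rcases ht.1.eq_or_lt with rfl | h0
  · simp only [sub_zero, ENNReal.rpow_one, ENNReal.rpow_zero, mul_one]
    refine lintegral_mono fun p => ENNReal.ofReal_le_ofReal (Real.exp_le_exp.2 (neg_le_neg ?_))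
    simpa using legendreGeodesic_le ht hne p p
  rcases ht.2.eq_or_lt with rfl | h1
  · simp only [sub_self, ENNReal.rpow_one, ENNReal.rpow_zero, one_mul]
    refine lintegral_mono fun p => ENNReal.ofReal_le_ofReal (Real.exp_le_exp.2 (neg_le_neg ?_))
    simpa using legendreGeodesic_le ht hne p p
  have meas : ∀ {u : (Fin n → ℝ) → ℝ}, Measurable u →
      Measurable fun p => ENNReal.ofReal (Real.exp (-(u p))) := fun hu =>
    (Real.measurable_exp.comp hu.neg).ennreal_ofReal
  have conv : ∀ {u : (Fin n → ℝ) → ℝ}, ConvexOn ℝ Set.univ u → Measurable u := fun hu =>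
    (continuousOn_univ.1 (hu.continuousOn isOpen_univ)).measurable
  refine prekopa_leindler h0 h1 n (meas (conv hu₀)) (meas (conv hu₁))
    (meas (measurable_legendreGeodesic ht)) fun p q => ?_
  rw [ENNReal.ofReal_rpow_of_pos (Real.exp_pos _), ENNReal.ofReal_rpow_of_pos (Real.exp_pos _),
    ← ENNReal.ofReal_mul (by positivity), ← Real.exp_mul, ← Real.exp_mul, ← Real.exp_add]
  refine ENNReal.ofReal_le_ofReal (Real.exp_le_exp.2 ?_)
  have := legendreGeodesic_le ht hne p q
  linarith
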